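/- Assume additionally λ₁ < 0, λ₂ > 0, α₁ > 4, and let M ≥ 0 and C, δ > 0 be real numbers such that N₂ ≤ C·M + δ·N₃ and δ·λ₂·(α₂−α₁)/(α₂+2) ≤ |λ₃|·(α₃−α₁)/(2(α₃+2)). Then Y ≥ ((α₁ − 4)/2)·G − (λ₂·C·(α₂−α₁)/(α₂+2))·M − α₁·E. -/

import Mathlib

/-!
In `Y + θ E` the `j`-th power enters with weight `-λⱼ (αⱼ - θ) / (αⱼ + 2)`. Choosing `θ = α₁`
eliminates the first power. The interpolation inequality trades the remaining bad term, in `N₂`,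
for a multiple of `M` and a multiple of `N₃`, and for small `δ` the focusing third power absorbs
the latter.
-/

section Virial

variable {ι : Type*} [Fintype ι]

/-- The energy of the one-dimensional NLS with nonlinearity `∑ j, l j |u|^(α j) u`, as a function
of `G = ‖u_x‖²` in `L²` and `N j = ‖u‖^(α j + 2)` in `L^(α j + 2)`. -/
noncomputable def nlsEnergy (G : ℝ) (l α N : ι → ℝ) : ℝ :=
  G / 2 + ∑ j, l j * N j / (α j + 2)

/-- The virial functional of the same equation, normalized so that the variance `V` of a solution
satisfies `V_tt = -4 * nlsVirial G l α N`. -/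
noncomputable def nlsVirial (G : ℝ) (l α N : ι → ℝ) : ℝ :=
  -2 * G - ∑ j, l j * α j * N j / (α j + 2)

theorem nlsVirial_add_mul_nlsEnergy (G : ℝ) (l α N : ι → ℝ) (θ : ℝ) :
    nlsVirial G l α N + θ * nlsEnergy G l α N =
      (θ - 4) / 2 * G - ∑ j, l j * (α j - θ) / (α j + 2) * N j := by
  have weights : ∑ j, l j * (α j - θ) / (α j + 2) * N j =
      ∑ j, l j * α j * N j / (α j + 2) - θ * ∑ j, l j * N j / (α j + 2) := by
    rw [Finset.mul_sum, ← Finset.sum_sub_distrib]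
    exact Finset.sum_congr rfl fun j _ ↦ by ring
  rw [weights, nlsVirial, nlsEnergy]
  ring

end Virial

theorem mul_le_add_of_interpolation {R : Type*} [CommSemiring R] [PartialOrder R]
    [IsOrderedRing R] {a b C M δ N₂ N₃ : R} (ha : 0 ≤ a) (hN₃ : 0 ≤ N₃)
    (hinterp : N₂ ≤ C * M + δ * N₃) (habsorb : δ * a ≤ b) :
    a * N₂ ≤ a * C * M + b * N₃ :=
  calc
    a * N₂ ≤ a * (C * M + δ * N₃) := by gcongr
    _ = a * C * M + δ * a * N₃ := by ring
    _ ≤ a * C * M + b * N₃ := by gcongr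

theorem virial_case4A_general
    {G N₁ N₂ N₃ l₁ l₂ l₃ α₁ α₂ α₃ E Y M C δ : ℝ}
    (hE : E = G / 2 + l₁ * N₁ / (α₁ + 2) + l₂ * N₂ / (α₂ + 2) + l₃ * N₃ / (α₃ + 2))
    (hY : Y = -2 * G - l₁ * α₁ * N₁ / (α₁ + 2) - l₂ * α₂ * N₂ / (α₂ + 2)
      - l₃ * α₃ * N₃ / (α₃ + 2))
    (hN₃ : 0 ≤ N₃) (hl₂ : 0 ≤ l₂) (hl₃ : l₃ ≤ 0)
    (hα₁ : -2 < α₁) (h₁₂ : α₁ ≤ α₂) (h₁₃ : α₁ ≤ α₃)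
    (hinterp : N₂ ≤ C * M + δ * N₃)
    (hδsmall : δ * l₂ * (α₂ - α₁) / (α₂ + 2) ≤ |l₃| * (α₃ - α₁) / (2 * (α₃ + 2))) :
    (α₁ - 4) / 2 * G - l₂ * C * (α₂ - α₁) / (α₂ + 2) * M - α₁ * E ≤ Y := by
  have virial_identity :
      Y + α₁ * E = (α₁ - 4) / 2 * G
        - (l₂ * (α₂ - α₁) / (α₂ + 2) * N₂ - |l₃| * (α₃ - α₁) / (α₃ + 2) * N₃) := by
    have h := nlsVirial_add_mul_nlsEnergy G ![l₁, l₂, l₃] ![α₁, α₂, α₃] ![N₁, N₂, N₃] α₁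
    simp only [nlsVirial, nlsEnergy, Fin.sum_univ_three, Matrix.cons_val] at h
    rw [hE, hY, abs_of_nonpos hl₃]
    linear_combination h
  have defocusing_nonneg : 0 ≤ l₂ * (α₂ - α₁) / (α₂ + 2) :=
    div_nonneg (mul_nonneg hl₂ (by linarith)) (by linarith)
  have focusing_nonneg : 0 ≤ |l₃| * (α₃ - α₁) / (α₃ + 2) :=
    div_nonneg (mul_nonneg (abs_nonneg l₃) (by linarith)) (by linarith)
  have absorption :
      δ * (l₂ * (α₂ - α₁) / (α₂ + 2)) ≤ |l₃| * (α₃ - α₁) / (α₃ + 2) :=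
    calc
      δ * (l₂ * (α₂ - α₁) / (α₂ + 2)) = δ * l₂ * (α₂ - α₁) / (α₂ + 2) := by ring
      _ ≤ |l₃| * (α₃ - α₁) / (2 * (α₃ + 2)) := hδsmall
      _ = |l₃| * (α₃ - α₁) / (α₃ + 2) / 2 := div_mul_eq_div_div_swap ..
      _ ≤ |l₃| * (α₃ - α₁) / (α₃ + 2) := half_le_self focusing_nonneg
  have bad_term_le := mul_le_add_of_interpolation defocusing_nonneg hN₃ hinterp absorption
  have mass_coeff : l₂ * (α₂ - α₁) / (α₂ + 2) * C * M =
      l₂ * C * (α₂ - α₁) / (α₂ + 2) * M := by ring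
  linarith

theorem virial_case4A
    (G N₁ N₂ N₃ : ℝ) (hG : 0 ≤ G) (hN₁ : 0 ≤ N₁) (hN₂ : 0 ≤ N₂) (hN₃ : 0 ≤ N₃)
    (l₁ l₂ l₃ : ℝ) (hl₃ : l₃ < 0)
    (α₁ α₂ α₃ : ℝ) (hα₁ : 0 < α₁) (h₁₂ : α₁ < α₂) (h₂₃ : α₂ < α₃)
    (E Y : ℝ)
    (hE : E = G / 2 + l₁ * N₁ / (α₁ + 2) + l₂ * N₂ / (α₂ + 2) + l₃ * N₃ / (α₃ + 2))
    (hY : Y = -2 * G - l₁ * α₁ * N₁ / (α₁ + 2) - l₂ * α₂ * N₂ / (α₂ + 2) - l₃ * α₃ * N₃ / (α₃ + 2))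
    (hl₁ : l₁ < 0) (hl₂ : 0 < l₂) (hα₁4 : 4 < α₁)
    (M C δ : ℝ) (hM : 0 ≤ M) (hC : 0 < C) (hδ : 0 < δ)
    (hinterp : N₂ ≤ C * M + δ * N₃)
    (hδsmall : δ * l₂ * (α₂ - α₁) / (α₂ + 2) ≤ |l₃| * (α₃ - α₁) / (2 * (α₃ + 2))) :
    Y ≥ ((α₁ - 4) / 2) * G - (l₂ * C * (α₂ - α₁) / (α₂ + 2)) * M - α₁ * E :=
  virial_case4A_general hE hY hN₃ hl₂.le hl₃.le (by linarith) h₁₂.le (h₁₂.trans h₂₃).le hinterp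
    hδsmall
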